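/- Fix β > 0, a real α > 2, p ∈ {1, 2}, and the classical couplings J(k) = |k|^{−α}. For a finite set Λ ⊂ ℤ let μ⁰_Λ be the probability measure on Ω = ℤ^ℤ supported on configurations vanishing outside Λ, with μ⁰_Λ({φ}) proportional to exp(−β·[Σ_{{i,j}⊆Λ, i≠j} |i−j|^{−α}·|φ_i − φ_j|^p + Σ_{i∈Λ} Σ_{j∉Λ} |i−j|^{−α}·|φ_i|^p]) for φ vanishing outside Λ. Then there is no constant C < ∞ and no increasing sequence of finite boxes (Λ_n) exhausting ℤ such that: ∫ φ_0² dμ⁰_{Λ_n} < C for every n, μ⁰_{Λ_n}(A) converges as n → ∞ to μ(A) for every cylinder event A (an event depending on finitely many coordinates), where μ is a probability measure on Ω that is invariant under the spatial shift S and satisfies the Gibbs (DLR) property: for every finite Λ ⊂ ℤ, for μ-a.e. ω, the conditional expectation under μ of the indicator of {φ agrees with φ̂ on Λ} given the σ-algebra generated by the coordinates outside Λ equals ω ↦ exp(−β·h_Λ(φ̂, ω))/Z_Λ(ω), with h_Λ(ψ, ω) := Σ_{{i,j}⊆Λ, i≠j} |i−j|^{−α}·|ψ_i − ψ_j|^p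 + Σ_{i∈Λ} Σ_{j∉Λ} |i−j|^{−α}·|ψ_i − ω_j|^p (assumed absolutely convergent μ-a.s.) and Z_Λ(ω) := Σ_{ψ∈ℤ^Λ} exp(−β·h_Λ(ψ, ω)) (assumed finite μ-a.s.). -/

import Mathlib

/-!
No shift-invariant Gibbs measure `μ` with finite second moments exists when `α > 2`; the bound on
the second moments passes from the finite-volume measures to the weak limit by lower semicontinuity.

Two facts contradict each other. First, shifting all heights in an interval `Λ` by `±1` only
changes the boundary energy, and the second difference of `|x|^p` is at most `2`, so that
`h_Λ(ψ+1, ω) + h_Λ(ψ-1, ω) ≤ 2 h_Λ(ψ, ω) + 2K`, with `K = ∑_k |k|^{1-α}` independent of the length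
of `Λ`. By convexity of the exponential and the DLR equations,
`μ(φ + 1_Λ ∈ G) + μ(φ - 1_Λ ∈ G) ≥ 2 e^{-βK} μ(G)` for every event `G` (`gibbs_shift_bound`).

Second, let `v_N` be the second moment of the average of `φ` over an interval of length `N`. By the
parallelogram identity and stationarity, the difference `D` of the averages over two adjacent
intervals of length `N` satisfies `E D² = 4 (v_N - v_{2N})`. Along `N = 2^k` the sequence `v_N` is
nonnegative and nonincreasing, so `E D² → 0`. Take `Λ` to be the first interval and
`G = {|D| < 1/2}`: then `μ(G) → 1`, whereas `φ ± 1_Λ ∈ G` forces `|D| ≥ 1/2`, so the left-hand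
side of the shift bound tends to `0`.
-/

open MeasureTheory

/-- The configuration space `Ω = ℤ^ℤ`, carrying the product σ-algebra. -/
abbrev Conf : Type := ℤ → ℤ

/-- The spatial shift `S(φ)_i = φ_{i+1}`. -/
def spatialShift : Conf → Conf := fun φ i => φ (i + 1)

/-- The inner part of the Hamiltonian in the finite volume `Λ`:
`Σ_{{i,j} ⊆ Λ, i ≠ j} J(i-j) |ψ_i - ψ_j|^p` (each unordered pair counted once). -/
noncomputable def innerH (J : ℤ → ℝ) (p : ℝ) (Λ : Finset ℤ) (ψ : Λ → ℤ) : ℝ :=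
  ∑ i : Λ, ∑ j : Λ, if (i : ℤ) < (j : ℤ) then
    J ((i : ℤ) - (j : ℤ)) * |(ψ i : ℝ) - (ψ j : ℝ)| ^ p else 0

/-- The boundary part of the Hamiltonian:
`Σ_{i ∈ Λ} Σ_{j ∉ Λ} J(i-j) |ψ_i - ω_j|^p`. -/
noncomputable def crossH (J : ℤ → ℝ) (p : ℝ) (Λ : Finset ℤ) (ψ : Λ → ℤ) (ω : Conf) : ℝ :=
  ∑ i : Λ, ∑' j : {j : ℤ // j ∉ Λ}, J ((i : ℤ) - (j : ℤ)) * |(ψ i : ℝ) - (ω (j : ℤ) : ℝ)| ^ p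

/-- The finite-volume Hamiltonian `h_Λ(ψ, ω)` with boundary condition `ω`. -/
noncomputable def hamH (J : ℤ → ℝ) (p : ℝ) (Λ : Finset ℤ) (ψ : Λ → ℤ) (ω : Conf) : ℝ :=
  innerH J p Λ ψ + crossH J p Λ ψ ω

/-- The partition function `Z_Λ(ω) = Σ_{ψ ∈ ℤ^Λ} exp(-β h_Λ(ψ, ω))`. -/
noncomputable def partZ (β : ℝ) (J : ℤ → ℝ) (p : ℝ) (Λ : Finset ℤ) (ω : Conf) : ℝ :=
  ∑' ψ : Λ → ℤ, Real.exp (-β * hamH J p Λ ψ ω)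

/-- The σ-algebra `F_{Λᶜ}` generated by the coordinates outside `Λ`. -/
def outsideSigma (Λ : Finset ℤ) : MeasurableSpace Conf :=
  MeasurableSpace.comap (fun (φ : Conf) (j : {j : ℤ // j ∉ Λ}) => φ (j : ℤ)) inferInstance

/-- The Gibbs (DLR) property for the Hamiltonian with couplings `J`, potential `|x|^p` and
inverse temperature `β`: for every finite `Λ ⊂ ℤ`, almost every boundary condition `ω` makes
all the series `h_Λ(ψ, ω)` absolutely convergent and the partition function finite, and for
every `ψ ∈ ℤ^Λ` the conditional probability of `{φ agrees with ψ on Λ}` given `F_{Λᶜ}` is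
a.e. equal to `ω ↦ exp(-β h_Λ(ψ, ω)) / Z_Λ(ω)`. -/
def IsGibbs (β : ℝ) (J : ℤ → ℝ) (p : ℝ) (μ : Measure Conf) : Prop :=
  ∀ Λ : Finset ℤ,
    (∀ᵐ ω ∂μ,
      (∀ ψ : Λ → ℤ, ∀ i : Λ,
        Summable (fun j : {j : ℤ // j ∉ Λ} =>
          J ((i : ℤ) - (j : ℤ)) * |(ψ i : ℝ) - (ω (j : ℤ) : ℝ)| ^ p)) ∧
      Summable (fun ψ : Λ → ℤ => Real.exp (-β * hamH J p Λ ψ ω))) ∧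
    ∀ ψ : Λ → ℤ,
      μ[Set.indicator {φ : Conf | ∀ i : Λ, φ (i : ℤ) = ψ i} (fun _ => (1 : ℝ)) | outsideSigma Λ]
        =ᵐ[μ] fun ω => Real.exp (-β * hamH J p Λ ψ ω) / partZ β J p Λ ω

/-- The classical couplings `J(k) = |k|^{-α}`. -/
noncomputable def jClassical (α : ℝ) : ℤ → ℝ := fun k => |(k : ℝ)| ^ (-α)

/-- The zero boundary condition. -/
def zeroBC : Conf := fun _ => 0

/-- Extension of `ψ : ℤ^Λ` to a full configuration vanishing outside `Λ`. -/
def extendConf (Λ : Finset ℤ) (ψ : Λ → ℤ) : Conf :=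
  fun i => if h : i ∈ Λ then ψ ⟨i, h⟩ else 0

/-- The finite-volume measure `μ⁰_Λ` with zero boundary conditions: it is supported on
configurations vanishing outside `Λ`, and gives such a configuration `φ` (determined by
`ψ = φ|_Λ`) the mass `exp(-β h_Λ(ψ, 0)) / Z_Λ(0)`, i.e. mass proportional to
`exp(-β [Σ_{{i,j}⊆Λ, i≠j} |i-j|^{-α} |φ_i-φ_j|^p + Σ_{i∈Λ} Σ_{j∉Λ} |i-j|^{-α} |φ_i|^p])`. -/
noncomputable def finVol (β α p : ℝ) (Λ : Finset ℤ) : Measure Conf :=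
  (ENNReal.ofReal (partZ β (jClassical α) p Λ zeroBC))⁻¹ •
    Measure.sum (fun ψ : Λ → ℤ =>
      ENNReal.ofReal (Real.exp (-β * hamH (jClassical α) p Λ ψ zeroBC)) •
        Measure.dirac (extendConf Λ ψ))

/-- A cylinder event: an event depending on only finitely many coordinates. -/
def IsCylinder (A : Set Conf) : Prop :=
  ∃ (Λ : Finset ℤ) (B : Set (Λ → ℤ)), A = {φ : Conf | (fun i : Λ => φ (i : ℤ)) ∈ B}

/-! ### Height shifts and block sums -/

/-- The configuration equal to `ψ` on `Λ` and to `ω` outside. -/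
def glue (Λ : Finset ℤ) (ψ : Λ → ℤ) (ω : Conf) : Conf :=
  fun i => if h : i ∈ Λ then ψ ⟨i, h⟩ else ω i

/-- Raise all heights in `Λ` by `k`. -/
def raise (Λ : Finset ℤ) (k : ℤ) (φ : Conf) : Conf :=
  fun i => if i ∈ Λ then φ i + k else φ i

/-- The event that `φ` agrees with `ψ` on `Λ`. -/
def agree (Λ : Finset ℤ) (ψ : Λ → ℤ) : Set Conf := {φ : Conf | ∀ i : Λ, φ (i : ℤ) = ψ i}

/-- The sum of the heights over `[a, a + N)`. -/
def blockSum (a : ℤ) (N : ℕ) (φ : Conf) : ℤ := ∑ i ∈ Finset.range N, φ (a + i)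

/-- The sum over `[0, N)` minus the sum over `[N, 2N)`. -/
def blockDiff (N : ℕ) (φ : Conf) : ℤ := blockSum 0 N φ - blockSum N N φ

/-- The constant `K = ∑_k |k| |k|^{-α}` bounding the couplings between an interval and its
complement. -/
noncomputable def couplingK (α : ℝ) : ℝ := ∑' k : ℤ, |(k : ℝ)| * jClassical α k

/-! ### The energy of a shift by `±1` on an interval -/

lemma jClassical_nonneg (α : ℝ) (k : ℤ) : 0 ≤ jClassical α k :=
  Real.rpow_nonneg (abs_nonneg _) _

lemma summable_jClassical {α : ℝ} (hα : 2 < α) : Summable (jClassical α) := by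
  exact Real.summable_abs_int_rpow (b := α) (by linarith)

lemma summable_abs_mul_jClassical {α : ℝ} (hα : 2 < α) :
    Summable (fun k : ℤ => |(k : ℝ)| * jClassical α k) := by
  refine (Real.summable_abs_int_rpow (b := α - 1) (by linarith)).congr fun k => ?_
  by_cases hk : k = 0
  · subst hk
    simp only [Int.cast_zero, abs_zero, zero_mul]
    rw [Real.zero_rpow]
    linarith
  · have : 0 < |(k : ℝ)| := by positivity
    rw [jClassical, show -(α - 1) = 1 + -α by ring, Real.rpow_add this, Real.rpow_one]

/-- For a given displacement `k`, at most `|k|` sites of an interval are displaced out of it. -/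
lemma card_exit_le (N : ℕ) (k : ℤ) :
    ((Finset.Ico (0 : ℤ) N).filter (fun i => i - k ∉ Finset.Ico (0 : ℤ) N)).card ≤ k.natAbs := by
  have hsub : (Finset.Ico (0 : ℤ) N).filter (fun i => i - k ∉ Finset.Ico (0 : ℤ) N) ⊆
      if 0 ≤ k then Finset.Ico 0 k else Finset.Ico (N + k) N := by
    intro i hi
    simp only [Finset.mem_filter, Finset.mem_Ico] at hi
    split_ifs <;> simp only [Finset.mem_Ico] <;> omega
  refine (Finset.card_le_card hsub).trans ?_
  split_ifs <;> simp only [Int.card_Ico] <;> omega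

lemma summable_coupling_out {α : ℝ} (hα : 2 < α) (Λ : Finset ℤ) (i : ℤ) :
    Summable (fun j : {j : ℤ // j ∉ Λ} => jClassical α (i - (j : ℤ))) :=
  ((summable_jClassical hα).comp_injective (sub_right_injective (b := i))).comp_injective
    Subtype.val_injective

/-- The total coupling between an interval and its complement is bounded uniformly in the length:
group the pairs `(i, j)` according to `k = i - j`. -/
lemma coupling_le {α : ℝ} (hα : 2 < α) (N : ℕ) :
    ∑ i : (Finset.Ico (0 : ℤ) N), ∑' j : {j : ℤ // j ∉ Finset.Ico (0 : ℤ) N},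
      jClassical α ((i : ℤ) - (j : ℤ)) ≤ couplingK α := by
  set Λ := Finset.Ico (0 : ℤ) N with hΛ
  have hind : ∀ i : ℤ, ∑' j : {j : ℤ // j ∉ Λ}, jClassical α (i - (j : ℤ)) =
      ∑' k : ℤ, if i - k ∉ Λ then jClassical α k else 0 := by
    intro i
    have h1 := tsum_subtype {j : ℤ | j ∉ Λ} (fun j => jClassical α (i - j))
    refine Eq.trans h1 ?_
    rw [← (Equiv.subLeft i).tsum_eq]
    refine tsum_congr fun k => ?_
    simp [Set.indicator_apply]
  have hs : ∀ i : ℤ, Summable (fun k : ℤ => if i - k ∉ Λ then jClassical α k else 0) := by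
    intro i
    refine Summable.of_nonneg_of_le (fun k => ?_) (fun k => ?_) (summable_jClassical hα)
    · split_ifs
      · exact le_rfl
      · exact jClassical_nonneg α k
    · split_ifs
      · exact jClassical_nonneg α k
      · exact le_rfl
  rw [Finset.sum_coe_sort Λ (fun i => ∑' j : {j : ℤ // j ∉ Λ}, jClassical α (i - (j : ℤ)))]
  simp_rw [hind]
  rw [← Summable.tsum_finsetSum (fun i _ => hs i)]
  refine Summable.tsum_le_tsum (fun k => ?_) (summable_sum fun i _ => hs i)
    (summable_abs_mul_jClassical hα)
  rw [← Finset.sum_filter, Finset.sum_const, nsmul_eq_mul]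
  refine mul_le_mul_of_nonneg_right ?_ (jClassical_nonneg α k)
  have := card_exit_le N k
  rw [← Int.cast_abs, ← Nat.cast_natAbs]
  exact_mod_cast this

lemma second_difference_le {p : ℝ} (hp : p = 1 ∨ p = 2) (x : ℝ) :
    |x + 1| ^ p + |x - 1| ^ p ≤ 2 * |x| ^ p + 2 := by
  rcases hp with rfl | rfl
  · simp only [Real.rpow_one]
    have h1 := abs_add_le x 1
    have h2 := abs_sub x 1
    simp only [abs_one] at h1 h2
    linarith
  · simp only [Real.rpow_two, sq_abs]
    nlinarith

lemma innerH_add_const (J : ℤ → ℝ) (p : ℝ) (Λ : Finset ℤ) (ψ : Λ → ℤ) (k : ℤ) :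
    innerH J p Λ (fun i => ψ i + k) = innerH J p Λ ψ := by
  simp [innerH]

lemma hamH_second_difference {α p : ℝ} (hα : 2 < α) (hp : p = 1 ∨ p = 2) (Λ : Finset ℤ)
    (ω : Conf)
    (hω : ∀ ψ : Λ → ℤ, ∀ i : Λ, Summable (fun j : {j : ℤ // j ∉ Λ} =>
          jClassical α ((i : ℤ) - (j : ℤ)) * |(ψ i : ℝ) - (ω (j : ℤ) : ℝ)| ^ p))
    (ψ : Λ → ℤ) :
    hamH (jClassical α) p Λ (fun i => ψ i + 1) ω + hamH (jClassical α) p Λ (fun i => ψ i + -1) ω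
      ≤ 2 * hamH (jClassical α) p Λ ψ ω +
        2 * ∑ i : Λ, ∑' j : {j : ℤ // j ∉ Λ}, jClassical α ((i : ℤ) - (j : ℤ)) := by
  unfold hamH
  rw [innerH_add_const, innerH_add_const]
  have key : crossH (jClassical α) p Λ (fun i => ψ i + 1) ω
      + crossH (jClassical α) p Λ (fun i => ψ i + -1) ω
      ≤ 2 * crossH (jClassical α) p Λ ψ ω +
        2 * ∑ i : Λ, ∑' j : {j : ℤ // j ∉ Λ}, jClassical α ((i : ℤ) - (j : ℤ)) := by
    unfold crossH
    rw [← Finset.sum_add_distrib, Finset.mul_sum, Finset.mul_sum, ← Finset.sum_add_distrib]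
    refine Finset.sum_le_sum fun i _ => ?_
    have hJ := summable_coupling_out hα Λ i
    have h0 := hω ψ i
    have h1 := hω (fun i => ψ i + 1) i
    have h2 := hω (fun i => ψ i + -1) i
    rw [← h1.tsum_add h2, ← tsum_mul_left, ← tsum_mul_left,
      ← (h0.mul_left 2).tsum_add (hJ.mul_left 2)]
    refine Summable.tsum_le_tsum (fun j => ?_) (h1.add h2) ((h0.mul_left 2).add (hJ.mul_left 2))
    have h3 := second_difference_le hp ((ψ i : ℝ) - (ω (j : ℤ) : ℝ))
    have h4 := mul_le_mul_of_nonneg_left h3 (jClassical_nonneg α ((i : ℤ) - (j : ℤ)))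
    push_cast
    rw [show (ψ i : ℝ) + 1 - (ω (j : ℤ) : ℝ) = (ψ i : ℝ) - (ω (j : ℤ) : ℝ) + 1 by ring,
      show (ψ i : ℝ) + -1 - (ω (j : ℤ) : ℝ) = (ψ i : ℝ) - (ω (j : ℤ) : ℝ) - 1 by ring]
    linarith
  linarith

/-- Convexity of the exponential, in the form of the AM-GM inequality. -/
lemma exp_second_difference {β a b c K : ℝ} (hβ : 0 < β) (h : a + b ≤ 2 * c + 2 * K) :
    2 * Real.exp (-β * K) * Real.exp (-β * c) ≤ Real.exp (-β * a) + Real.exp (-β * b) := by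
  have e1 : Real.exp (-β * K) * Real.exp (-β * c) ≤ Real.exp (-β * a / 2) * Real.exp (-β * b / 2) := by
    rw [← Real.exp_add, ← Real.exp_add]
    apply Real.exp_le_exp.mpr
    nlinarith
  have e2 : Real.exp (-β * a) = Real.exp (-β * a / 2) ^ 2 := by
    rw [← Real.exp_nat_mul]; congr 1; push_cast; ring
  have e3 : Real.exp (-β * b) = Real.exp (-β * b / 2) ^ 2 := by
    rw [← Real.exp_nat_mul]; congr 1; push_cast; ring
  rw [e2, e3]
  nlinarith [sq_nonneg (Real.exp (-β * a / 2) - Real.exp (-β * b / 2))]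

/-! ### The shift bound from the DLR equations -/

lemma outsideSigma_le (Λ : Finset ℤ) : outsideSigma Λ ≤ MeasurableSpace.pi :=
  Measurable.comap_le (measurable_pi_lambda _ fun j => measurable_pi_apply (j : ℤ))

lemma measurable_glue (Λ : Finset ℤ) (ψ : Λ → ℤ) :
    Measurable[outsideSigma Λ, MeasurableSpace.pi] (glue Λ ψ) := by
  refine @measurable_pi_lambda _ _ _ (outsideSigma Λ) _ _ fun i => ?_
  unfold glue
  by_cases h : i ∈ Λ
  · simp only [h, dite_true]
    exact @measurable_const _ _ _ (outsideSigma Λ) _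
  · simp only [h, dite_false]
    exact (measurable_pi_apply (⟨i, h⟩ : {j : ℤ // j ∉ Λ})).comp
      (comap_measurable (fun (φ : Conf) (j : {j : ℤ // j ∉ Λ}) => φ (j : ℤ)))

lemma measurableSet_agree (Λ : Finset ℤ) (ψ : Λ → ℤ) : MeasurableSet (agree Λ ψ) := by
  unfold agree
  rw [Set.ofPred_forall]
  exact MeasurableSet.iInter fun i =>
    measurableSet_eq_fun (measurable_pi_apply (i : ℤ)) measurable_const

lemma measurable_raise (Λ : Finset ℤ) (k : ℤ) : Measurable (raise Λ k) := by
  refine measurable_pi_lambda _ fun i => ?_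
  unfold raise
  split_ifs
  · exact (measurable_of_countable (fun n : ℤ => n + k)).comp (measurable_pi_apply i)
  · exact measurable_pi_apply i

lemma raise_eq_glue (Λ : Finset ℤ) (k : ℤ) (ψ : Λ → ℤ) {φ : Conf} (h : φ ∈ agree Λ ψ) :
    raise Λ k φ = glue Λ (fun i => ψ i + k) φ := by
  ext i
  unfold raise glue
  by_cases hi : i ∈ Λ
  · simp only [hi, if_true, dite_true]
    rw [h ⟨i, hi⟩]
  · simp [hi]

/-- The probability of `raise Λ k φ ∈ G`, decomposed according to the values of `raise Λ k φ`
on `Λ`. -/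
lemma measure_raise_preimage (μ : Measure Conf) (Λ : Finset ℤ) (k : ℤ) {G : Set Conf}
    (hG : MeasurableSet G) :
    μ (raise Λ k ⁻¹' G) = ∑' ψ : Λ → ℤ, μ (agree Λ (fun i => ψ i + -k) ∩ glue Λ ψ ⁻¹' G) := by
  have h1 : raise Λ k ⁻¹' G = ⋃ ψ : Λ → ℤ, agree Λ (fun i => ψ i + -k) ∩ glue Λ ψ ⁻¹' G := by
    ext φ
    simp only [Set.mem_iUnion, Set.mem_inter_iff, Set.mem_preimage]
    constructor
    · intro h
      have ha : φ ∈ agree Λ (fun i => φ i) := fun i => rfl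
      refine ⟨fun i => φ i + k, fun i => by simp, ?_⟩
      rwa [← raise_eq_glue Λ k _ ha]
    · rintro ⟨ψ, ha, h⟩
      rw [raise_eq_glue Λ k _ ha]
      simpa using h
  rw [h1, measure_iUnion]
  · intro ψ ψ' hne
    refine Set.disjoint_left.mpr fun φ h h' => hne ?_
    ext i
    have e1 : φ i = ψ i + -k := h.1 i
    have e2 : φ i = ψ' i + -k := h'.1 i
    omega
  · intro ψ
    exact (measurableSet_agree Λ _).inter (outsideSigma_le Λ _ (measurable_glue Λ ψ hG))

/-- The DLR equation integrated over an event of the outside σ-algebra. -/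
lemma gibbs_measure_agree {β α p : ℝ} {μ : Measure Conf} [IsProbabilityMeasure μ]
    (hμ : IsGibbs β (jClassical α) p μ) (Λ : Finset ℤ) (ψ : Λ → ℤ) {B : Set Conf}
    (hB : MeasurableSet[outsideSigma Λ] B) :
    IntegrableOn (fun ω => Real.exp (-β * hamH (jClassical α) p Λ ψ ω) /
        partZ β (jClassical α) p Λ ω) B μ ∧
    ∫ ω in B, Real.exp (-β * hamH (jClassical α) p Λ ψ ω) / partZ β (jClassical α) p Λ ω ∂μ
      = μ.real (agree Λ ψ ∩ B) := by
  have hd := (hμ Λ).2 ψ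
  have hBm := outsideSigma_le Λ _ hB
  have hint : Integrable (Set.indicator (agree Λ ψ) (fun _ => (1 : ℝ))) μ :=
    (integrable_const _).indicator (measurableSet_agree Λ ψ)
  refine ⟨((integrable_condExp).congr hd).integrableOn, ?_⟩
  rw [← setIntegral_congr_ae hBm (hd.mono fun x hx _ => hx)]
  refine (setIntegral_condExp (outsideSigma_le Λ) hint hB).trans ?_
  rw [integral_indicator_const _ (measurableSet_agree Λ ψ)]
  rw [measureReal_restrict_apply (measurableSet_agree Λ ψ)]
  simp

/-- Shifting the heights in an interval by `±1` distorts a Gibbs measure by a factor that is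
bounded uniformly in the length of the interval. -/
lemma gibbs_shift_bound {β α p : ℝ} (hβ : 0 < β) (hα : 2 < α) (hp : p = 1 ∨ p = 2)
    {μ : Measure Conf} [IsProbabilityMeasure μ] (hμ : IsGibbs β (jClassical α) p μ) (N : ℕ)
    {G : Set Conf} (hG : MeasurableSet G) :
    ENNReal.ofReal (2 * Real.exp (-β * couplingK α)) * μ G ≤
      μ (raise (Finset.Ico 0 (N : ℤ)) 1 ⁻¹' G) + μ (raise (Finset.Ico 0 (N : ℤ)) (-1) ⁻¹' G) := by
  have hK := coupling_le hα N
  have hsum := (hμ (Finset.Ico 0 (N : ℤ))).1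
  set Λ := Finset.Ico 0 (N : ℤ) with hΛ
  have h0 : μ G = ∑' ψ : Λ → ℤ, μ (agree Λ ψ ∩ glue Λ ψ ⁻¹' G) := by
    have := measure_raise_preimage μ Λ 0 hG
    have hr : raise Λ 0 = id := by
      ext φ i
      simp [raise]
    rw [hr] at this
    simpa using this
  rw [h0, measure_raise_preimage μ Λ 1 hG, measure_raise_preimage μ Λ (-1) hG,
    ← ENNReal.tsum_mul_left, ← ENNReal.tsum_add]
  refine ENNReal.tsum_le_tsum fun ψ => ?_
  have hB := measurable_glue Λ ψ hG
  set B := glue Λ ψ ⁻¹' G with hBdef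
  obtain ⟨i0, e0⟩ := gibbs_measure_agree hμ Λ ψ hB
  obtain ⟨i1, e1⟩ := gibbs_measure_agree hμ Λ (fun i => ψ i + 1) hB
  obtain ⟨i2, e2⟩ := gibbs_measure_agree hμ Λ (fun i => ψ i + -1) hB
  have hreal : 2 * Real.exp (-β * couplingK α) * μ.real (agree Λ ψ ∩ B) ≤
      μ.real (agree Λ (fun i => ψ i + -1) ∩ B) + μ.real (agree Λ (fun i => ψ i + 1) ∩ B) := by
    rw [← e0, ← e1, ← e2, ← integral_const_mul, ← integral_add i2 i1]
    refine integral_mono_ae (i0.const_mul _) (i2.add i1) (ae_restrict_of_ae ?_)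
    filter_upwards [hsum] with ω hω
    have hexp := exp_second_difference (K := couplingK α) hβ
      ((hamH_second_difference hα hp Λ ω hω.1 ψ).trans (by gcongr))
    have hZ : 0 ≤ partZ β (jClassical α) p Λ ω := tsum_nonneg fun _ => (Real.exp_pos _).le
    rw [← add_div, ← mul_div_assoc]
    refine div_le_div_of_nonneg_right ?_ hZ
    linarith
  rw [neg_neg]
  rw [← ofReal_measureReal (measure_ne_top μ (agree Λ ψ ∩ B)),
    ← ofReal_measureReal (measure_ne_top μ (agree Λ (fun i => ψ i + -1) ∩ B)),
    ← ofReal_measureReal (measure_ne_top μ (agree Λ (fun i => ψ i + 1) ∩ B)),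
    ← ENNReal.ofReal_mul (by positivity), ← ENNReal.ofReal_add measureReal_nonneg measureReal_nonneg]
  exact ENNReal.ofReal_le_ofReal hreal

/-! ### Second moments of the limit -/

lemma lintegral_height (ν : Measure Conf) :
    ∫⁻ φ, ENNReal.ofReal ((φ 0 : ℝ) ^ 2) ∂ν =
      ∑' k : ℤ, ENNReal.ofReal ((k : ℝ) ^ 2) * ν {φ : Conf | φ 0 = k} := by
  have hm : Measurable (fun φ : Conf => φ 0) := measurable_pi_apply 0
  have h := lintegral_map (μ := ν) (f := fun k : ℤ => ENNReal.ofReal ((k : ℝ) ^ 2))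
    (measurable_of_countable _) hm
  rw [← h, lintegral_countable']
  refine tsum_congr fun k => ?_
  rw [Measure.map_apply hm (measurableSet_singleton k)]
  rfl

lemma isCylinder_height (k : ℤ) : IsCylinder {φ : Conf | φ 0 = k} :=
  ⟨{0}, {ψ | ψ ⟨0, by simp⟩ = k}, rfl⟩

/-- Lower semicontinuity of the second moment: expand over the values of `φ_0` and pass to the limit
in finite partial sums. -/
lemma limit_second_moment {ν : ℕ → Measure Conf} {μ : Measure Conf} {C : ENNReal}
    (hC : ∀ n, ∫⁻ φ, ENNReal.ofReal ((φ 0 : ℝ) ^ 2) ∂(ν n) ≤ C)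
    (hlim : ∀ A : Set Conf, IsCylinder A →
      Filter.Tendsto (fun n => ν n A) Filter.atTop (nhds (μ A))) :
    ∫⁻ φ, ENNReal.ofReal ((φ 0 : ℝ) ^ 2) ∂μ ≤ C := by
  rw [lintegral_height, ENNReal.tsum_eq_iSup_sum]
  refine iSup_le fun s => ?_
  refine le_of_tendsto' (tendsto_finsetSum s fun k _ =>
    ENNReal.Tendsto.const_mul (hlim _ (isCylinder_height k)) (Or.inr ENNReal.ofReal_ne_top))
    fun n => ?_
  refine (ENNReal.sum_le_tsum s).trans ?_
  rw [← lintegral_height]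
  exact hC n

/-! ### Block averages of a stationary measure -/

lemma measurable_blockSum (a : ℤ) (N : ℕ) : Measurable (blockSum a N) := by
  unfold blockSum
  exact Finset.measurable_sum _ fun i _ => measurable_pi_apply (a + (i : ℤ))

lemma measurable_spatialShift : Measurable spatialShift :=
  measurable_pi_lambda _ fun i => measurable_pi_apply (i + 1)

lemma blockSum_shift_iterate (a : ℤ) (N : ℕ) (m : ℕ) (φ : Conf) :
    blockSum a N (spatialShift^[m] φ) = blockSum (a + m) N φ := by
  induction m generalizing φ with
  | zero => simp
  | succ m ih =>
    rw [Function.iterate_succ_apply, ih]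
    unfold blockSum spatialShift
    refine Finset.sum_congr rfl fun i _ => ?_
    congr 1
    push_cast
    ring

lemma integral_blockSum_sq {μ : Measure Conf} (hS : MeasurePreserving spatialShift μ μ)
    (N m : ℕ) :
    ∫ φ, (blockSum m N φ : ℝ) ^ 2 ∂μ = ∫ φ, (blockSum 0 N φ : ℝ) ^ 2 ∂μ := by
  have h := (hS.iterate m)
  have hf : Measurable (fun φ => (blockSum 0 N φ : ℝ) ^ 2) :=
    (((measurable_of_countable (fun k : ℤ => (k : ℝ))).comp (measurable_blockSum 0 N))).pow_const 2
  have h2 := integral_map (μ := μ) (φ := spatialShift^[m]) h.measurable.aemeasurable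
    (f := fun φ => (blockSum 0 N φ : ℝ) ^ 2) hf.aestronglyMeasurable
  rw [h.map_eq] at h2
  rw [h2]
  simp_rw [blockSum_shift_iterate, zero_add]

lemma memLp_blockSum {μ : Measure Conf} (hS : MeasurePreserving spatialShift μ μ)
    (h2 : MemLp (fun φ : Conf => (φ 0 : ℝ)) 2 μ) (m N : ℕ) :
    MemLp (fun φ => (blockSum m N φ : ℝ)) 2 μ := by
  have hsingle : ∀ n : ℕ, MemLp (fun φ : Conf => (φ (n : ℤ) : ℝ)) 2 μ := by
    intro n
    have := h2.comp_measurePreserving (hS.iterate n)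
    refine this.ae_eq (Filter.Eventually.of_forall fun φ => ?_)
    have := blockSum_shift_iterate 0 1 n φ
    simp [blockSum] at this
    simp [this]
  have : (fun φ => (blockSum m N φ : ℝ)) =
      fun φ => ∑ i ∈ Finset.range N, (φ (m + i : ℤ) : ℝ) := by
    ext φ
    simp [blockSum]
  rw [this]
  refine memLp_finsetSum _ fun i _ => ?_
  simpa using hsingle (m + i)

/-- The parallelogram identity for two adjacent blocks of equal length. -/
lemma integral_blockDiff_sq {μ : Measure Conf} (hS : MeasurePreserving spatialShift μ μ)
    (h2 : MemLp (fun φ : Conf => (φ 0 : ℝ)) 2 μ) (N : ℕ) :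
    ∫ φ, (blockDiff N φ : ℝ) ^ 2 ∂μ =
      4 * ∫ φ, (blockSum 0 N φ : ℝ) ^ 2 ∂μ - ∫ φ, (blockSum 0 (2 * N) φ : ℝ) ^ 2 ∂μ := by
  have iA : Integrable (fun φ => (blockSum 0 N φ : ℝ) ^ 2) μ := by
    simpa using (memLp_blockSum hS h2 0 N).integrable_sq
  have iB := (memLp_blockSum hS h2 N N).integrable_sq
  have iC : Integrable (fun φ => (blockSum 0 (2 * N) φ : ℝ) ^ 2) μ := by
    simpa using (memLp_blockSum hS h2 0 (2 * N)).integrable_sq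
  have hsplit : ∀ φ, blockSum 0 (2 * N) φ = blockSum 0 N φ + blockSum N N φ := by
    intro φ
    unfold blockSum
    rw [two_mul, Finset.sum_range_add]
    simp
  have hpt : ∀ φ, (blockDiff N φ : ℝ) ^ 2 = (2 * (blockSum 0 N φ : ℝ) ^ 2 +
      2 * (blockSum N N φ : ℝ) ^ 2) - (blockSum 0 (2 * N) φ : ℝ) ^ 2 := by
    intro φ
    rw [hsplit]
    unfold blockDiff
    push_cast
    ring
  simp_rw [hpt]
  have iAB : Integrable (fun φ => 2 * (blockSum 0 N φ : ℝ) ^ 2 +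
      2 * (blockSum N N φ : ℝ) ^ 2) μ := (iA.const_mul 2).add (iB.const_mul 2)
  rw [integral_sub iAB iC,
    integral_add (iA.const_mul 2) (iB.const_mul 2), integral_const_mul, integral_const_mul,
    integral_blockSum_sq hS N N]
  ring

/-- Along dyadic lengths the averages over adjacent blocks merge in mean square. -/
lemma exists_small_blockDiff {μ : Measure Conf} (hS : MeasurePreserving spatialShift μ μ)
    (h2 : MemLp (fun φ : Conf => (φ 0 : ℝ)) 2 μ) {ε : ℝ} (hε : 0 < ε) :
    ∃ N : ℕ, 0 < N ∧ ∫ φ, (blockDiff N φ : ℝ) ^ 2 ∂μ < ε * (N : ℝ) ^ 2 := by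
  set v : ℕ → ℝ := fun k => (∫ φ, (blockSum 0 (2 ^ k) φ : ℝ) ^ 2 ∂μ) / ((2 : ℝ) ^ k) ^ 2 with hv
  have hrel : ∀ k, ∫ φ, (blockDiff (2 ^ k) φ : ℝ) ^ 2 ∂μ =
      4 * (v k - v (k + 1)) * ((2 : ℝ) ^ k) ^ 2 := by
    intro k
    rw [integral_blockDiff_sq hS h2, hv]
    have h2k : (2 : ℝ) ^ k ≠ 0 := by positivity
    simp only [pow_succ' (2 : ℕ) k, pow_succ' (2 : ℝ) k]
    field_simp
    ring
  have hanti : Antitone v := by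
    refine antitone_nat_of_succ_le fun k => ?_
    have h0 : 0 ≤ ∫ φ, (blockDiff (2 ^ k) φ : ℝ) ^ 2 ∂μ := integral_nonneg fun φ => sq_nonneg _
    rw [hrel] at h0
    have := nonneg_of_mul_nonneg_left h0 (by positivity)
    linarith
  have hbdd : BddBelow (Set.range v) := by
    refine ⟨0, ?_⟩
    rintro _ ⟨k, rfl⟩
    exact div_nonneg (integral_nonneg fun φ => sq_nonneg _) (by positivity)
  have hconv := tendsto_atTop_ciInf hanti hbdd
  have hd := hconv.sub (hconv.comp (Filter.tendsto_add_atTop_nat 1))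
  rw [sub_self] at hd
  obtain ⟨k, hk⟩ := (hd.eventually (gt_mem_nhds (show (0 : ℝ) < ε / 4 by positivity))).exists
  refine ⟨2 ^ k, by positivity, ?_⟩
  rw [hrel]
  push_cast
  refine mul_lt_mul_of_pos_right ?_ (by positivity)
  simp only [Function.comp] at hk
  linarith

/-! ### The contradiction -/

lemma blockDiff_raise (N : ℕ) (k : ℤ) (φ : Conf) :
    blockDiff N (raise (Finset.Ico 0 (N : ℤ)) k φ) = blockDiff N φ + N * k := by
  have h1 : blockSum 0 N (raise (Finset.Ico 0 (N : ℤ)) k φ) = blockSum 0 N φ + N * k := by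
    unfold blockSum
    rw [show (N : ℤ) * k = ∑ i ∈ Finset.range N, k by simp, ← Finset.sum_add_distrib]
    refine Finset.sum_congr rfl fun i hi => ?_
    have : i < N := Finset.mem_range.mp hi
    simp [raise, this]
  have h2 : blockSum N N (raise (Finset.Ico 0 (N : ℤ)) k φ) = blockSum N N φ := by
    unfold blockSum
    refine Finset.sum_congr rfl fun i _ => ?_
    simp [raise]
  unfold blockDiff
  rw [h1, h2]
  ring

/-- A stationary measure with finite second moments is not Gibbs: the event `|D| < 1/2` for the
difference `D` of adjacent block averages is almost certain, but is left by raising or lowering one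
block by `1`. -/
lemma no_gibbs {β α p : ℝ} (hβ : 0 < β) (hα : 2 < α) (hp : p = 1 ∨ p = 2)
    {μ : Measure Conf} [IsProbabilityMeasure μ] (hS : MeasurePreserving spatialShift μ μ)
    (h2 : MemLp (fun φ : Conf => (φ 0 : ℝ)) 2 μ) (hμ : IsGibbs β (jClassical α) p μ) : False := by
  set c := Real.exp (-β * couplingK α) with hc
  have hcpos : 0 < c := Real.exp_pos _
  -- With `m = μ(Gᶜ)`, the shift bound gives `2c(1 - m) ≤ 2m`, i.e. `m ≥ c / (1 + c) = 2δ`.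
  set δ := c / (2 * (1 + c)) with hδ
  have hδpos : 0 < δ := by positivity
  -- The `4` compensates the Chebyshev factor `(1/2)⁻²`.
  obtain ⟨N, hN, hsmall⟩ := exists_small_blockDiff hS h2 (show 0 < δ / 4 by positivity)
  set G : Set Conf := {φ | 2 * |blockDiff N φ| < N} with hGdef
  have hDm : Measurable (blockDiff N) := (measurable_blockSum 0 N).sub (measurable_blockSum N N)
  have hG : MeasurableSet G :=
    hDm (MeasurableSet.of_discrete (s := {d : ℤ | 2 * |d| < N}))
  have hraise : ∀ k : ℤ, |k| = 1 → raise (Finset.Ico 0 (N : ℤ)) k ⁻¹' G ⊆ Gᶜ := by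
    intro k hk φ h1 h3
    have e1 : 2 * |blockDiff N (raise (Finset.Ico 0 (N : ℤ)) k φ)| < N := h1
    have e2 : 2 * |blockDiff N φ| < N := h3
    rw [blockDiff_raise] at e1
    rcases (abs_eq (by norm_num)).mp hk with rfl | rfl <;>
      simp only [mul_one, mul_neg] at e1 <;>
      rcases abs_cases (blockDiff N φ) with ⟨a1, b1⟩ | ⟨a1, b1⟩ <;>
      rw [a1] at e2
    all_goals
      have e4 := le_abs_self (blockDiff N φ + N)
      have e5 := neg_abs_le (blockDiff N φ + -(N : ℤ))
      omega
  have hcheb : μ.real Gᶜ < δ := by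
    have hi : Integrable (fun φ => (blockDiff N φ : ℝ) ^ 2) μ := by
      have hA := memLp_blockSum hS h2 0 N
      have hB := memLp_blockSum hS h2 N N
      have := (hA.sub hB).integrable_sq
      simpa [blockDiff] using this
    have hm := mul_meas_ge_le_integral_of_nonneg
      (Filter.Eventually.of_forall fun φ => sq_nonneg (blockDiff N φ : ℝ)) hi ((N : ℝ) ^ 2 / 4)
    have hsub : Gᶜ ⊆ {φ | (N : ℝ) ^ 2 / 4 ≤ (blockDiff N φ : ℝ) ^ 2} := by
      intro φ hφ
      have e1 : (N : ℤ) ≤ 2 * |blockDiff N φ| := not_lt.mp hφ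
      have e2 : (N : ℝ) ≤ 2 * |(blockDiff N φ : ℝ)| := by exact_mod_cast e1
      have e3 : (0 : ℝ) ≤ N := Nat.cast_nonneg N
      simp only [Set.mem_ofPred_eq]
      rw [← sq_abs (blockDiff N φ : ℝ)]
      nlinarith
    have hle : μ.real Gᶜ ≤ μ.real {φ | (N : ℝ) ^ 2 / 4 ≤ (blockDiff N φ : ℝ) ^ 2} :=
      measureReal_mono hsub
    have hNpos : (0 : ℝ) < (N : ℝ) ^ 2 := by positivity
    nlinarith
  have hbound := gibbs_shift_bound hβ hα hp hμ N hG
  have hbound2 : ENNReal.ofReal (2 * c) * μ G ≤ μ Gᶜ + μ Gᶜ :=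
    hbound.trans (add_le_add (measure_mono (hraise 1 (by norm_num)))
      (measure_mono (hraise (-1) (by norm_num))))
  have hreal : 2 * c * μ.real G ≤ μ.real Gᶜ + μ.real Gᶜ := by
    have := ENNReal.toReal_mono (by finiteness) hbound2
    rwa [ENNReal.toReal_mul, ENNReal.toReal_ofReal (by positivity),
      ENNReal.toReal_add (by finiteness) (by finiteness)] at this
  rw [probReal_compl_eq_one_sub hG] at hreal hcheb
  have hδe : δ * (2 * (1 + c)) = c := by rw [hδ]; field_simp
  nlinarith

/-- **Corollary** : for `β > 0`, `α > 2` and `p ∈ {1,2}`, there is no constant `C < ∞` and no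
increasing sequence of finite boxes `(Λ_n)` exhausting `ℤ` such that the finite-volume measures
`μ⁰_{Λ_n}` have second moments of `φ_0` uniformly bounded by `C` and converge on all cylinder
events to a shift-invariant Gibbs measure `μ`. -/
theorem corollary_no_localised_weak_limit (β α p : ℝ) (hβ : 0 < β) (hα : 2 < α)
    (hp : p = 1 ∨ p = 2) :
    ¬ ∃ (C : ℝ) (Λ : ℕ → Finset ℤ) (μ : Measure Conf),
        (∀ n, ∃ a b : ℤ, Λ n = Finset.Icc a b) ∧
        Monotone Λ ∧
        (∀ i : ℤ, ∃ n, i ∈ Λ n) ∧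
        (∀ n, ∫⁻ φ, ENNReal.ofReal ((φ 0 : ℝ) ^ 2) ∂(finVol β α p (Λ n)) < ENNReal.ofReal C) ∧
        (∀ A : Set Conf, IsCylinder A →
          Filter.Tendsto (fun n => finVol β α p (Λ n) A) Filter.atTop (nhds (μ A))) ∧
        IsProbabilityMeasure μ ∧
        μ.map spatialShift = μ ∧
        IsGibbs β (jClassical α) p μ := by
  rintro ⟨C, Λ, μ, -, -, -, hC, hlim, hprob, hS, hμ⟩
  have hmom := limit_second_moment (fun n => (hC n).le) hlim
  have h2 : MemLp (fun φ : Conf => (φ 0 : ℝ)) 2 μ := by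
    have hm : Measurable (fun φ : Conf => (φ 0 : ℝ)) :=
      (measurable_of_countable (fun k : ℤ => (k : ℝ))).comp (measurable_pi_apply 0)
    rw [memLp_two_iff_integrable_sq hm.aestronglyMeasurable]
    refine ⟨(hm.pow_const 2).aestronglyMeasurable, ?_⟩
    rw [hasFiniteIntegral_iff_ofReal (Filter.Eventually.of_forall fun φ => sq_nonneg _)]
    exact hmom.trans_lt ENNReal.ofReal_lt_top
  exact no_gibbs hβ hα hp ⟨measurable_spatialShift, hS⟩ h2 hμ
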